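/- Let n ≥ 1, q a prime power, and J ⊆ {1, …, n} a nonempty self-opposite type. If C is an EKR-set of flags of type J in V = F_q^{n+1}, then |C| · (1 + (√q)^{n+1}) ≤ v, where v is the total number of flags of type J in V (so |C| ≤ v/(1 + q^{(n+1)/2})). -/

import Mathlib

/-!
Complete flags suffice: the complete flags extending the members of an EKR-set of type `J` are
pairwise non-opposite, and by transitivity of the linear group all flags of type `J` have the same
number of extensions.

On complete flags, the matrices `T i` of adjacency in dimension `i` satisfy
`(T i - q) * (T i + 1) = 0`, and the matrix `D` of opposition is the product of the `T i` along a
reduced word of the longest permutation of `n + 1` letters. By Hoffman's ratio bound it is enough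
that an eigenvalue `μ` of `D` on the vectors orthogonal to `1` has `|μ| ≤ k / √q ^ (n + 1)`, where
`k` is the valency. Since `D * T i = T (n + 1 - i) * D`, the `μ ^ 2`-eigenspace of `D ^ 2` is
invariant under all `T i`. On it `det D` is a product of determinants of the `T i`. Each of these
is `± q ^ a` with `a` the dimension of the `q`-eigenspace of `T i`, and no nonzero vector
orthogonal to `1` lies in all these eigenspaces; this bounds the sum of the dimensions `a`, and
with it `|μ|`.
-/

/-- A flag of type `J ⊆ {1, …, n}` in `V = F^{n+1}`: a family of subspaces `(U_k)_{k∈J}`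
with `dim U_k = k` and `U_k ⊆ U_l` whenever `k ≤ l`. -/
structure FlagOfType (F : Type) [Field F] (n : ℕ) (J : Finset ℕ) where
  U : J → Submodule F (Fin (n + 1) → F)
  dim : ∀ k : J, Module.finrank F (U k) = (k : ℕ)
  mono : ∀ k l : J, (k : ℕ) ≤ (l : ℕ) → U k ≤ U l

/-- Two flags `(U_k)` and `(W_k)` of self-opposite type `J` are opposite if
`U_k ∩ W_{n+1−k} = 0` for all `k ∈ J`. -/
def FlagOfType.Opposite {F : Type} [Field F] {n : ℕ} {J : Finset ℕ}
    (F1 F2 : FlagOfType F n J) : Prop :=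
  ∀ k l : J, (l : ℕ) = n + 1 - (k : ℕ) → F1.U k ⊓ F2.U l = ⊥

open Module Matrix

/-- The product `T m * T (m - 1) * ⋯ * T 1`. -/
def descendingProd {R : Type*} [Monoid R] (T : ℕ → R) : ℕ → R
  | 0 => 1
  | m + 1 => T (m + 1) * descendingProd T m

/-- The standard reduced word of the longest element of the symmetric group on `N` letters,
evaluated at `T i` in place of the `i`-th simple transposition, `1 ≤ i < N`. -/
def longestWord {R : Type*} [Monoid R] (T : ℕ → R) : ℕ → R
  | 0 => 1
  | m + 1 => longestWord T m * descendingProd T m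

section LongestWord

theorem map_longestWord {R S G : Type*} [Monoid R] [Monoid S] [FunLike G R S] [MonoidHomClass G R S]
    (φ : G) (T : ℕ → R) (N : ℕ) : φ (longestWord T N) = longestWord (fun i => φ (T i)) N := by
  have hdesc (m : ℕ) : φ (descendingProd T m) = descendingProd (fun i => φ (T i)) m := by
    induction m with
    | zero => exact map_one φ
    | succ m ih => simp only [descendingProd, map_mul, ih]
  induction N with
  | zero => exact map_one φ
  | succ N ih => simp only [longestWord, map_mul, ih, hdesc]

theorem longestWord_intertwine {R M N : Type*} [Semiring R] [AddCommMonoid M] [Module R M]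
    [AddCommMonoid N] [Module R N] {n : ℕ} {S : ℕ → End R M} {T : ℕ → End R N} (f : M →ₗ[R] N)
    (h : ∀ i ∈ Finset.Ico 1 n, ∀ x, f (S i x) = T i (f x)) (x : M) :
    f (longestWord S n x) = longestWord T n (f x) := by
  have hdesc (m : ℕ) (hm : m < n) (x : M) :
      f (descendingProd S m x) = descendingProd T m (f x) := by
    induction m with
    | zero => rfl
    | succ m ih =>
      simp only [descendingProd, End.mul_apply, h (m + 1) (by simp [hm]), ih (by lia)]
  have hlong (m : ℕ) (hm : m ≤ n) (x : M) : f (longestWord S m x) = longestWord T m (f x) := by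
    induction m generalizing x with
    | zero => rfl
    | succ m ih => simp only [longestWord, End.mul_apply, ih (by lia), hdesc m hm]
  exact hlong n le_rfl x

theorem longestWord_eq_prod_pow {R : Type*} [CommMonoid R] (t : ℕ → R) (N : ℕ) :
    longestWord t N = ∏ i ∈ Finset.Ico 1 N, t i ^ (N - i) := by
  have hdesc (m : ℕ) : descendingProd t m = ∏ i ∈ Finset.Ico 1 (m + 1), t i := by
    induction m with
    | zero => rfl
    | succ m ih =>
      rw [descendingProd, ih, Finset.prod_Ico_succ_top (show 1 ≤ m + 1 by lia), mul_comm]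
  induction N with
  | zero => rfl
  | succ N ih =>
    have hsplit : ∏ i ∈ Finset.Ico 1 N, t i ^ (N - i) =
        ∏ i ∈ Finset.Ico 1 (N + 1), t i ^ (N - i) := by
      obtain _ | N := N
      · rfl
      · simp [Finset.prod_Ico_succ_top]
    rw [longestWord, ih, hdesc, hsplit, ← Finset.prod_mul_distrib]
    refine Finset.prod_congr rfl fun i hi => ?_
    rw [← pow_succ, Nat.sub_add_comm (by simpa [Nat.lt_succ_iff] using (Finset.mem_Ico.1 hi).2)]

theorem longestWord_sq_of_symm {R : Type*} [CommMonoid R] {t : ℕ → R} {N : ℕ}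
    (ht : ∀ i ∈ Finset.Ico 1 N, t i = t (N - i)) :
    longestWord t N ^ 2 = (∏ i ∈ Finset.Ico 1 N, t i) ^ N := by
  have hreflect : longestWord t N = ∏ i ∈ Finset.Ico 1 N, t i ^ i := by
    rw [longestWord_eq_prod_pow]
    refine Finset.prod_nbij' (N - ·) (N - ·) ?_ ?_ ?_ ?_ fun i hi => by rw [ht i hi]
    all_goals simp only [Finset.mem_Ico]; lia
  rw [sq]
  nth_rw 1 [longestWord_eq_prod_pow]
  rw [hreflect, ← Finset.prod_mul_distrib, ← Finset.prod_pow]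
  refine Finset.prod_congr rfl fun i hi => ?_
  rw [← pow_add, Nat.sub_add_cancel (Finset.mem_Ico.1 hi).2.le]

theorem longestWord_apply_of_forall_eigenvector {R M : Type*} [CommSemiring R] [AddCommMonoid M]
    [Module R M] {N : ℕ} {T : ℕ → End R M} {t : ℕ → R} {x : M}
    (h : ∀ i ∈ Finset.Ico 1 N, T i x = t i • x) : longestWord T N x = longestWord t N • x := by
  have h₁ := longestWord_intertwine (S := fun i => algebraMap R (End R R) (t i)) (T := T)
    (LinearMap.toSpanSingleton R M x) (n := N)
    (fun i hi c => by simp [h i hi, mul_smul, smul_comm c]) 1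
  simpa [← map_longestWord] using h₁.symm

end LongestWord

section Hecke

/-- A family `T` obeying those relations of the Iwahori-Hecke algebra of type `A_{N-1}` with
parameter `q` on which the eigenvalue bound rests. The second relation says that the longest
element normalises the simple reflections; it replaces the braid relations. -/
structure IsHeckeFamily {R : Type*} [Ring R] [Algebra ℝ R] (q : ℝ) (N : ℕ) (T : ℕ → R) :
    Prop where
  quadratic : ∀ i ∈ Finset.Ico 1 N, (T i - q • 1) * (T i + 1) = 0
  longestWord_mul : ∀ i ∈ Finset.Ico 1 N, longestWord T N * T i = T (N - i) * longestWord T N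

theorem IsHeckeFamily.map {R S : Type*} [Ring R] [Algebra ℝ R] [Ring S] [Algebra ℝ S] {q : ℝ}
    {N : ℕ} {T : ℕ → R} (hT : IsHeckeFamily q N T) (φ : R →ₐ[ℝ] S) :
    IsHeckeFamily q N fun i => φ (T i) where
  quadratic i hi := by simpa using congrArg φ (hT.quadratic i hi)
  longestWord_mul i hi := by
    simpa only [map_mul, map_longestWord] using congrArg φ (hT.longestWord_mul i hi)

theorem IsHeckeFamily.of_injective {M W : Type*} [AddCommGroup M] [Module ℝ M] [AddCommGroup W]
    [Module ℝ W] {q : ℝ} {N : ℕ} {S : ℕ → End ℝ M} {T : ℕ → End ℝ W} (hT : IsHeckeFamily q N T)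
    {f : M →ₗ[ℝ] W} (hf : Function.Injective f)
    (h : ∀ i ∈ Finset.Ico 1 N, ∀ x, f (S i x) = T i (f x)) : IsHeckeFamily q N S where
  quadratic i hi := by
    ext x
    apply hf
    simpa [h i hi] using LinearMap.congr_fun (hT.quadratic i hi) (f x)
  longestWord_mul i hi := by
    ext x
    apply hf
    have hi' : N - i ∈ Finset.Ico 1 N := by simp only [Finset.mem_Ico] at hi ⊢; lia
    simpa [h i hi, h _ hi', longestWord_intertwine f h] using
      LinearMap.congr_fun (hT.longestWord_mul i hi) (f x)

theorem det_eq_of_sub_smul_mul_sub_smul_eq_zero {K M : Type*} [Field K] [AddCommGroup M]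
    [Module K M] [FiniteDimensional K M] {T : End K M} {a b : K}
    (h : (T - a • 1) * (T - b • 1) = 0) :
    LinearMap.det T =
      a ^ finrank K (LinearMap.ker (T - a • 1)) * b ^ finrank K (LinearMap.range (T - a • 1)) := by
  set E := LinearMap.ker (T - a • 1)
  have mem_E (x : M) : x ∈ E ↔ T x = a • x := by simp [E, sub_eq_zero]
  have hE : ∀ x ∈ E, T x ∈ E := fun x hx => by
    rw [(mem_E x).1 hx]
    exact E.smul_mem a hx
  have h_restrict : T.restrict hE = a • LinearMap.id := by
    ext x
    exact (mem_E x).1 x.2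
  have h_quot : E.mapQ E T hE = b • LinearMap.id := by
    refine Submodule.linearMap_qext _ (LinearMap.ext fun x => ?_)
    exact (Submodule.Quotient.eq E).2 (LinearMap.congr_fun h x)
  rw [LinearMap.det_eq_det_mul_det E T hE, h_restrict, h_quot, LinearMap.det_smul,
    LinearMap.det_smul, (T - a • 1).quotKerEquivRange.finrank_eq]
  simp

theorem finrank_le_sum_finrank_range {ι K M : Type*} {P : ι → Type*} [DivisionRing K]
    [AddCommGroup M] [Module K M] [FiniteDimensional K M] [∀ i, AddCommGroup (P i)]
    [∀ i, Module K (P i)] (s : Finset ι) (f : ∀ i, M →ₗ[K] P i)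
    (h : ∀ x, (∀ i ∈ s, f i x = 0) → x = 0) :
    finrank K M ≤ ∑ i ∈ s, finrank K (LinearMap.range (f i)) := by
  let φ : M →ₗ[K] (i : s) → LinearMap.range (f i) := LinearMap.pi fun i => (f i).rangeRestrict
  have hφ : Function.Injective φ := (injective_iff_map_eq_zero φ).2 fun x hx =>
    h x fun i hi => congrArg Subtype.val (congrFun hx ⟨i, hi⟩)
  rw [← s.sum_coe_sort, ← finrank_pi_fintype]
  exact LinearMap.finrank_le_finrank_of_injective hφ

theorem IsHeckeFamily.abs_prod_det_mul_pow_le {M : Type*} [AddCommGroup M] [Module ℝ M]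
    [FiniteDimensional ℝ M] {q : ℝ} {N : ℕ} {T : ℕ → End ℝ M} (hT : IsHeckeFamily q N T)
    (hq : 1 ≤ q) (h : ∀ x, (∀ i ∈ Finset.Ico 1 N, T i x = q • x) → x = 0) :
    |∏ i ∈ Finset.Ico 1 N, LinearMap.det (T i)| * q ^ finrank ℝ M ≤
      q ^ ((N - 1) * finrank ℝ M) := by
  have hdet (i : ℕ) (hi : i ∈ Finset.Ico 1 N) : |LinearMap.det (T i)| *
      q ^ finrank ℝ (LinearMap.range (T i - q • 1)) = q ^ finrank ℝ M := by
    rw [det_eq_of_sub_smul_mul_sub_smul_eq_zero (b := -1)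
        (by simpa using hT.quadratic i hi), abs_mul, abs_neg_one_pow, mul_one, abs_pow,
      abs_of_nonneg (by linarith), ← pow_add, add_comm, LinearMap.finrank_range_add_finrank_ker]
  calc |∏ i ∈ Finset.Ico 1 N, LinearMap.det (T i)| * q ^ finrank ℝ M
      ≤ |∏ i ∈ Finset.Ico 1 N, LinearMap.det (T i)| *
          q ^ ∑ i ∈ Finset.Ico 1 N, finrank ℝ (LinearMap.range (T i - q • 1)) := by
        gcongr
        exact finrank_le_sum_finrank_range _ _ fun x hx =>
          h x fun _ hi => sub_eq_zero.1 (hx _ hi)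
    _ = ∏ _i ∈ Finset.Ico 1 N, q ^ finrank ℝ M := by
        rw [Finset.abs_prod, ← Finset.prod_pow_eq_pow_sum, ← Finset.prod_mul_distrib]
        exact Finset.prod_congr rfl hdet
    _ = q ^ ((N - 1) * finrank ℝ M) := by
        rw [Finset.prod_const, Nat.card_Ico, ← pow_mul, mul_comm]

/- Since `D` intertwines `T i` and `T (N - i)`, these have the same determinant. So
`det D ^ 2 = (∏ det (T i)) ^ N`, and the determinants are bounded because the `(-1)`-parts of the
`T i` must together fill up `M`. -/
theorem IsHeckeFamily.mul_pow_le_of_longestWord_sq {M : Type*} [AddCommGroup M] [Module ℝ M]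
    [FiniteDimensional ℝ M] [Nontrivial M] {q c : ℝ} {N : ℕ} {T : ℕ → End ℝ M}
    (hT : IsHeckeFamily q N T) (hq : 1 ≤ q)
    (h : ∀ x, (∀ i ∈ Finset.Ico 1 N, T i x = q • x) → x = 0) (hc : 0 < c)
    (hD : longestWord T N ^ 2 = c • 1) : c * q ^ N ≤ q ^ ((N - 1) * N) := by
  set d := finrank ℝ M
  have hdet_sq : LinearMap.det (longestWord T N) ^ 2 = c ^ d := by
    rw [← map_pow, hD, LinearMap.det_smul, map_one, mul_one]
  have hdet_ne : LinearMap.det (longestWord T N) ≠ 0 := by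
    rw [← sq_pos_iff, hdet_sq]
    positivity
  have hsymm (i : ℕ) (hi : i ∈ Finset.Ico 1 N) :
      LinearMap.det (T i) = LinearMap.det (T (N - i)) := by
    have := congrArg LinearMap.det (hT.longestWord_mul i hi)
    rw [map_mul, map_mul, mul_comm] at this
    exact mul_right_cancel₀ hdet_ne this
  have hprod : c ^ d = |∏ i ∈ Finset.Ico 1 N, LinearMap.det (T i)| ^ N := by
    rw [← abs_pow, ← longestWord_sq_of_symm hsymm, ← map_longestWord, hdet_sq,
      abs_of_pos (pow_pos hc d)]
  refine (pow_le_pow_iff_left₀ (by positivity) (by positivity)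
    (finrank_pos (R := ℝ) (M := M)).ne').1 ?_
  calc (c * q ^ N) ^ d = (|∏ i ∈ Finset.Ico 1 N, LinearMap.det (T i)| * q ^ d) ^ N := by
        rw [mul_pow, mul_pow, hprod, pow_right_comm q]
    _ ≤ (q ^ ((N - 1) * d)) ^ N := by
        gcongr
        exact hT.abs_prod_det_mul_pow_le hq h
    _ = (q ^ ((N - 1) * N)) ^ d := by rw [← pow_mul, ← pow_mul, mul_right_comm]

theorem IsHeckeFamily.sq_mul_pow_le_of_eigenvector {W : Type*} [AddCommGroup W] [Module ℝ W]
    [FiniteDimensional ℝ W] {q μ : ℝ} {N : ℕ} {T : ℕ → End ℝ W} (hT : IsHeckeFamily q N T)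
    (hq : 1 ≤ q) {L : Submodule ℝ W} (hL : ∀ i ∈ Finset.Ico 1 N, ∀ x ∈ L, T i x ∈ L)
    (h : ∀ x ∈ L, (∀ i ∈ Finset.Ico 1 N, T i x = q • x) → x = 0) {g : W} (hgL : g ∈ L)
    (hg : g ≠ 0) (hμ : longestWord T N g = μ • g) : μ ^ 2 * q ^ N ≤ q ^ ((N - 1) * N) := by
  obtain rfl | hμ₀ := eq_or_ne μ 0
  · rw [zero_pow two_ne_zero, zero_mul]
    positivity
  let M : Submodule ℝ W := L ⊓ LinearMap.ker (longestWord T N ^ 2 - μ ^ 2 • 1)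
  have mem_M (x : W) : x ∈ M ↔ x ∈ L ∧ longestWord T N (longestWord T N x) = μ ^ 2 • x := by
    simp [M, sub_eq_zero, sq (longestWord T N)]
  have hM (i : ℕ) (hi : i ∈ Finset.Ico 1 N) (x : W) (hx : x ∈ M) : T i x ∈ M := by
    have hi' : N - i ∈ Finset.Ico 1 N := by simp only [Finset.mem_Ico] at hi ⊢; lia
    have h₁ (y : W) := LinearMap.congr_fun (hT.longestWord_mul i hi) y
    have h₂ (y : W) := LinearMap.congr_fun (hT.longestWord_mul (N - i) hi') y
    rw [Nat.sub_sub_self (Finset.mem_Ico.1 hi).2.le] at h₂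
    simp only [End.mul_apply] at h₁ h₂
    rw [mem_M] at hx ⊢
    exact ⟨hL i hi x hx.1, by rw [h₁, h₂, hx.2, map_smul]⟩
  have hS (i : ℕ) : ∃ S : End ℝ M, i ∈ Finset.Ico 1 N → ∀ x, (S x : W) = T i x := by
    by_cases hi : i ∈ Finset.Ico 1 N
    · exact ⟨(T i).restrict (hM i hi), fun _ _ => rfl⟩
    · exact ⟨0, fun hi' => absurd hi' hi⟩
  choose S hS using hS
  have hgM : g ∈ M := (mem_M g).2 ⟨hgL, by rw [hμ, map_smul, hμ, smul_smul, sq]⟩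
  have : Nontrivial M := ⟨⟨g, hgM⟩, 0, fun h₀ => hg (congrArg Subtype.val h₀)⟩
  refine (hT.of_injective M.injective_subtype hS).mul_pow_le_of_longestWord_sq hq
    (fun x hx => ?_) (by positivity) ?_
  · refine Subtype.ext (h x x.2.1 fun i hi => ?_)
    simpa [hS i hi] using congrArg Subtype.val (hx i hi)
  · ext x
    have hSN (y : M) : (longestWord S N y : W) = longestWord T N y :=
      longestWord_intertwine M.subtype hS y
    simpa [sq (longestWord S N), hSN] using ((mem_M x).1 x.2).2

end Hecke

section RatioBound

variable {X : Type*} [Fintype X]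

theorem mul_sq_dotProduct_le_of_forall_eigenvalue {A : Matrix X X ℝ} {k c : ℝ} (hA : Aᵀ = A)
    (h1 : A *ᵥ 1 = k • 1)
    (hmin : ∀ (μ : ℝ) (g : X → ℝ), g ≠ 0 → 1 ⬝ᵥ g = 0 → A *ᵥ g = μ • g → -c ≤ μ) (f : X → ℝ) :
    (k + c) / Fintype.card X * (1 ⬝ᵥ f) ^ 2 ≤ f ⬝ᵥ (A *ᵥ f) + c * (f ⬝ᵥ f) := by
  classical
  set r := (k + c) / Fintype.card X with hr
  let B := A + c • 1 - r • vecMulVec 1 1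
  have hBf (f : X → ℝ) : B *ᵥ f = A *ᵥ f + c • f - (r * (1 ⬝ᵥ f)) • 1 := by
    simp only [B, sub_mulVec, add_mulVec, smul_mulVec, one_mulVec, vecMulVec_mulVec,
      op_smul_eq_smul, smul_smul]
  have hBsymm : Bᵀ = B := by
    simp only [B, transpose_sub, transpose_add, transpose_smul, transpose_one, hA,
      transpose_vecMulVec]
  have hB : B.IsHermitian := by rwa [IsHermitian, conjTranspose_eq_transpose_of_trivial]
  have hB1 : B *ᵥ 1 = 0 := by
    ext x
    have : (Fintype.card X : ℝ) ≠ 0 := Nat.cast_ne_zero.2 (Fintype.card_pos_iff.2 ⟨x⟩).ne'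
    simp [hBf, h1, hr, this]
  have hpos : B.PosSemidef := by
    rw [hB.posSemidef_iff_eigenvalues_nonneg]
    refine Pi.le_def.2 fun j => ?_
    by_contra! hneg
    set g : X → ℝ := (hB.eigenvectorBasis j).ofLp
    have hg : g ≠ 0 := by simpa [g] using hB.eigenvectorBasis.orthonormal.ne_zero j
    have hBg : B *ᵥ g = hB.eigenvalues j • g := hB.mulVec_eigenvectorBasis j
    have hperp : 1 ⬝ᵥ g = 0 := by
      have h₀ : hB.eigenvalues j * (1 ⬝ᵥ g) = 0 := by
        rw [← smul_eq_mul, ← dotProduct_smul, ← hBg, dotProduct_mulVec, ← mulVec_transpose,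
          hBsymm, hB1, zero_dotProduct]
      exact (mul_eq_zero.1 h₀).resolve_left hneg.ne
    have hAg : A *ᵥ g = (hB.eigenvalues j - c) • g := by
      rw [sub_smul, ← hBg, hBf, hperp, mul_zero, zero_smul, sub_zero, add_sub_cancel_right]
    have := hmin _ g hg hperp hAg
    simp only [Pi.zero_apply] at hneg
    linarith
  have hf := hpos.dotProduct_mulVec_nonneg f
  rw [star_trivial, hBf, dotProduct_sub, dotProduct_add, dotProduct_smul, dotProduct_smul,
    dotProduct_comm f 1, smul_eq_mul, smul_eq_mul, mul_assoc, ← sq] at hf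
  exact sub_nonneg.1 hf

/-- Hoffman's ratio bound. -/
theorem card_mul_add_le_of_forall_eigenvalue {A : Matrix X X ℝ} {k c : ℝ} (hA : Aᵀ = A)
    (h1 : A *ᵥ 1 = k • 1)
    (hmin : ∀ (μ : ℝ) (g : X → ℝ), g ≠ 0 → 1 ⬝ᵥ g = 0 → A *ᵥ g = μ • g → -c ≤ μ)
    (hc : 0 ≤ c) {C : Finset X} (hC : ∀ x ∈ C, ∀ y ∈ C, A x y = 0) :
    (C.card : ℝ) * (k + c) ≤ c * Fintype.card X := by
  classical
  obtain rfl | hCne := C.eq_empty_or_nonempty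
  · simpa using by positivity
  have hCpos : (0 : ℝ) < C.card := by exact_mod_cast hCne.card_pos
  have hXpos : (0 : ℝ) < Fintype.card X := hCpos.trans_le (by exact_mod_cast C.card_le_univ)
  let χ : X → ℝ := fun x => if x ∈ C then 1 else 0
  have h1χ : 1 ⬝ᵥ χ = (C.card : ℝ) := by simp [χ, dotProduct]
  have hχχ : χ ⬝ᵥ χ = C.card := by simp [χ, dotProduct]
  have hχA : χ ⬝ᵥ (A *ᵥ χ) = 0 := by
    refine Finset.sum_eq_zero fun x _ => ?_
    by_cases hx : x ∈ C
    · simpa [χ, hx, mulVec, dotProduct] using Finset.sum_eq_zero (hC x hx)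
    · simp [χ, hx]
  have h := mul_sq_dotProduct_le_of_forall_eigenvalue hA h1 hmin χ
  rw [h1χ, hχA, hχχ, zero_add, sq, ← mul_assoc, mul_le_mul_iff_left₀ hCpos, div_mul_eq_mul_div,
    div_le_iff₀ hXpos] at h
  rwa [mul_comm]

end RatioBound

section HeckeMatrices

variable {X : Type*} [Fintype X] [DecidableEq X] {q : ℝ} {N : ℕ} {T : ℕ → Matrix X X ℝ}

theorem longestWord_mulVec_of_forall_eigenvector {t : ℕ → ℝ} {f : X → ℝ}
    (h : ∀ i ∈ Finset.Ico 1 N, T i *ᵥ f = t i • f) :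
    longestWord T N *ᵥ f = longestWord t N • f := by
  rw [← longestWord_apply_of_forall_eigenvector (T := fun i => toLinAlgEquiv' (T i)) h,
    ← map_longestWord]
  rfl

theorem IsHeckeFamily.sq_mul_pow_le_of_mulVec (hT : IsHeckeFamily q N T) (hq : 1 ≤ q)
    (hsymm : ∀ i ∈ Finset.Ico 1 N, (T i)ᵀ = T i)
    (h1 : ∀ i ∈ Finset.Ico 1 N, T i *ᵥ 1 = q • 1)
    (hconst : ∀ f : X → ℝ, (∀ i ∈ Finset.Ico 1 N, T i *ᵥ f = q • f) → ∀ x y, f x = f y)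
    {μ : ℝ} {g : X → ℝ} (hg : g ≠ 0) (hperp : 1 ⬝ᵥ g = 0) (hμ : longestWord T N *ᵥ g = μ • g) :
    μ ^ 2 * q ^ N ≤ q ^ ((N - 1) * N) := by
  have hL (f : X → ℝ) : f ∈ LinearMap.ker (dotProductBilin ℝ ℝ (1 : X → ℝ)) ↔ 1 ⬝ᵥ f = 0 := Iff.rfl
  refine (hT.map (toLinAlgEquiv' : Matrix X X ℝ ≃ₐ[ℝ] _).toAlgHom).sq_mul_pow_le_of_eigenvector hq
    (fun i hi f hf => ?_) (fun f hf hTf => ?_) ((hL g).2 hperp) hg ?_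
  · rw [hL] at hf ⊢
    change 1 ⬝ᵥ (T i *ᵥ f) = 0
    rw [dotProduct_mulVec, ← mulVec_transpose, hsymm i hi, h1 i hi, smul_dotProduct, hf, smul_zero]
  · ext x
    have hcard : (Fintype.card X : ℝ) ≠ 0 := Nat.cast_ne_zero.2 (Fintype.card_pos_iff.2 ⟨x⟩).ne'
    have hsum : 1 ⬝ᵥ f = Fintype.card X * f x := by
      simp [dotProduct, hconst f hTf _ x]
    rw [(hL f).1 hf] at hsum
    simpa [hcard] using hsum.symm
  · rw [← map_longestWord]
    exact hμ

theorem IsHeckeFamily.card_mul_one_add_sqrt_pow_le (hT : IsHeckeFamily q N T) (hq : 1 ≤ q)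
    (hsymm : ∀ i ∈ Finset.Ico 1 N, (T i)ᵀ = T i) (hDsymm : (longestWord T N)ᵀ = longestWord T N)
    (h1 : ∀ i ∈ Finset.Ico 1 N, T i *ᵥ 1 = q • 1)
    (hconst : ∀ f : X → ℝ, (∀ i ∈ Finset.Ico 1 N, T i *ᵥ f = q • f) → ∀ x y, f x = f y)
    {C : Finset X} (hC : ∀ x ∈ C, ∀ y ∈ C, longestWord T N x y = 0) :
    (C.card : ℝ) * (1 + √q ^ N) ≤ Fintype.card X := by
  have hs : 0 < √q ^ N := pow_pos (Real.sqrt_pos.2 (by linarith)) N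
  have hs_sq : (√q ^ N) ^ 2 = q ^ N := by rw [pow_right_comm, Real.sq_sqrt (by linarith)]
  set k := longestWord (fun _ => q) N with hk
  have hk_pos : 0 < k := by
    rw [hk, longestWord_eq_prod_pow]
    positivity
  have hk_sq : k ^ 2 = q ^ ((N - 1) * N) := by
    rw [hk, longestWord_sq_of_symm fun _ _ => rfl, Finset.prod_const, Nat.card_Ico, pow_mul]
  have hmin (μ : ℝ) (g : X → ℝ) (hg : g ≠ 0) (hperp : 1 ⬝ᵥ g = 0)
      (hμ : longestWord T N *ᵥ g = μ • g) : -(k / √q ^ N) ≤ μ := by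
    have hsq := hT.sq_mul_pow_le_of_mulVec hq hsymm h1 hconst hg hperp hμ
    rw [← hs_sq, ← mul_pow, ← hk_sq] at hsq
    rw [← neg_div, div_le_iff₀ hs]
    exact (abs_le_of_sq_le_sq' hsq hk_pos.le).1
  have h := card_mul_add_le_of_forall_eigenvalue hDsymm
    (longestWord_mulVec_of_forall_eigenvector h1) hmin (by positivity) hC
  refine le_of_mul_le_mul_left (le_of_eq_of_le ?_ h) (show 0 < k / √q ^ N by positivity)
  rw [← hk]
  field_simp
  ring

end HeckeMatrices

/-- The `0`-`1` matrix of a relation: entry `(x, y)` is `1` if `R x y` and `0` otherwise. -/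
noncomputable def relMatrix {X : Type*} (R : X → X → Prop) : Matrix X X ℝ :=
  open Classical in of fun x y => if R x y then 1 else 0

section RelMatrix

variable {X : Type*}

theorem relMatrix_transpose (R : X → X → Prop) : (relMatrix R)ᵀ = relMatrix fun x y => R y x :=
  rfl

theorem relMatrix_congr {R S : X → X → Prop} (h : ∀ x y, R x y ↔ S x y) :
    relMatrix R = relMatrix S := by
  rw [show R = S from funext₂ fun x y => propext (h x y)]

theorem relMatrix_eq_one [DecidableEq X] : relMatrix (fun x y : X => x = y) = 1 := by
  ext x y
  simp [relMatrix, one_apply]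

theorem relMatrix_apply_of_not {R : X → X → Prop} {x y : X} (h : ¬ R x y) :
    relMatrix R x y = 0 := by
  simp [relMatrix, h]

theorem relMatrix_transpose_of_symm {R : X → X → Prop} (h : ∀ x y, R x y → R y x) :
    (relMatrix R)ᵀ = relMatrix R :=
  relMatrix_congr fun x y => ⟨h y x, h x y⟩

variable [Fintype X]

theorem relMatrix_mulVec_of_const {R : X → X → Prop} {x : X} {f : X → ℝ}
    (h : ∀ y, R x y → f y = f x) : (relMatrix R *ᵥ f) x = Nat.card {y // R x y} * f x := by
  classical
  simp only [relMatrix, mulVec, dotProduct, of_apply, ite_mul, one_mul, zero_mul]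
  rw [← Finset.sum_filter, Finset.sum_congr rfl fun y hy => h y (Finset.mem_filter.1 hy).2,
    Finset.sum_const, nsmul_eq_mul, Nat.card_eq_fintype_card, Fintype.card_subtype]

theorem relMatrix_mulVec_eq_of_rel {r : X → X → Prop} (hr : Equivalence r) (f : X → ℝ) {x y : X}
    (hxy : r x y) : (relMatrix r *ᵥ f) x = (relMatrix r *ᵥ f) y := by
  have h (z : X) : relMatrix r x z = relMatrix r y z := by
    simp only [relMatrix, of_apply]
    congr 1
    exact propext ⟨hr.trans (hr.symm hxy), hr.trans hxy⟩
  simp only [mulVec, dotProduct, h]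

variable [DecidableEq X]

theorem relMatrix_sub_one_mul_add_one {r : X → X → Prop} (hr : Equivalence r) {q : ℝ}
    (hcard : ∀ x, (Nat.card {y // r x y} : ℝ) = q + 1) :
    (relMatrix r - 1 - q • 1) * (relMatrix r - 1 + 1) = 0 := by
  have hsq : relMatrix r * relMatrix r = (q + 1) • relMatrix r := by
    ext x z
    rw [← hcard x]
    refine relMatrix_mulVec_of_const (f := fun y => relMatrix r y z) fun y hxy => ?_
    simp only [relMatrix, of_apply]
    congr 1
    exact propext ⟨hr.trans hxy, hr.trans (hr.symm hxy)⟩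
  rw [sub_add_cancel, sub_mul, sub_mul, hsq, one_mul, smul_mul, one_mul]
  module

theorem relMatrix_sub_one_mulVec_one {r : X → X → Prop} {q : ℝ}
    (hcard : ∀ x, (Nat.card {y // r x y} : ℝ) = q + 1) :
    (relMatrix r - 1) *ᵥ 1 = q • 1 := by
  ext x
  rw [sub_mulVec, one_mulVec, Pi.sub_apply, relMatrix_mulVec_of_const fun _ _ => rfl, hcard]
  simp

theorem eq_of_relMatrix_sub_one_mulVec_eq {r : X → X → Prop} (hr : Equivalence r) {q : ℝ}
    (hq : q + 1 ≠ 0) {f : X → ℝ} (hf : (relMatrix r - 1) *ᵥ f = q • f) {x y : X} (hxy : r x y) :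
    f x = f y := by
  have h : relMatrix r *ᵥ f = (q + 1) • f := by
    rw [add_smul, one_smul, ← hf, sub_mulVec, one_mulVec, sub_add_cancel]
  have hxy' := relMatrix_mulVec_eq_of_rel hr f hxy
  rw [h] at hxy'
  exact mul_left_cancel₀ hq hxy'

theorem relMatrix_and_eq_mul {P Q r : X → X → Prop}
    (hP : ∀ x y y', r y' y → (P x y' ↔ P x y))
    (hQ : ∀ x y, P x y → ∃! y', r y' y ∧ ¬ Q x y') :
    relMatrix (fun x y => P x y ∧ Q x y) =
      relMatrix (fun x y => P x y ∧ ¬ Q x y) * (relMatrix r - 1) := by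
  classical
  have hmul : relMatrix (fun x y => P x y ∧ ¬ Q x y) * relMatrix r = relMatrix P := by
    ext x y
    have hentry (y' : X) : relMatrix (fun x y => P x y ∧ ¬ Q x y) x y' * relMatrix r y' y =
        if P x y ∧ r y' y ∧ ¬ Q x y' then 1 else 0 := by
      by_cases hr : r y' y
      · simp [relMatrix, hr, hP x y y' hr]
      · simp [relMatrix, hr]
    simp only [mul_apply, hentry]
    by_cases hxy : P x y
    · obtain ⟨y₀, hy₀, huniq⟩ := hQ x y hxy
      have hiff (y' : X) : r y' y ∧ ¬ Q x y' ↔ y' = y₀ := ⟨huniq y', by rintro rfl; exact hy₀⟩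
      simp [relMatrix, hxy, hiff]
    · simp [relMatrix, hxy]
  rw [mul_sub, mul_one, hmul]
  ext x y
  by_cases hx : P x y <;> by_cases hQ : Q x y <;> simp [relMatrix, hx, hQ]

end RelMatrix

section Subspaces

variable {K V : Type*} [DivisionRing K] [AddCommGroup V] [Module K V] [FiniteDimensional K V]
  {A B X Y : Submodule K V}

theorem finrank_add_finrank_le_of_disjoint_of_le (hA : A ≤ Y) (hB : B ≤ Y) (h : Disjoint A B) :
    finrank K A + finrank K B ≤ finrank K Y := by
  rw [← Submodule.finrank_sup_add_finrank_inf_eq, h.eq_bot, finrank_bot, add_zero]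
  exact Submodule.finrank_mono (sup_le hA hB)

theorem exists_le_le_finrank_eq (h : A ≤ B) {d : ℕ} (hA : finrank K A ≤ d)
    (hB : d ≤ finrank K B) : ∃ Y : Submodule K V, A ≤ Y ∧ Y ≤ B ∧ finrank K Y = d := by
  induction d, hA using Nat.le_induction with
  | base => exact ⟨A, le_rfl, h, rfl⟩
  | succ d hAd ih =>
    obtain ⟨Y, hAY, hYB, rfl⟩ := ih (by lia)
    have hlt : Y < B := hYB.lt_of_ne (by rintro rfl; lia)
    obtain ⟨z, hzB, hzY⟩ := SetLike.exists_of_lt hlt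
    exact ⟨Y ⊔ K ∙ z, hAY.trans le_sup_left,
      sup_le hYB ((Submodule.span_singleton_le_iff_mem z B).2 hzB),
      Submodule.finrank_sup_span_singleton hzY⟩

theorem finrank_inf_eq_one (hYX : Y ≤ X) (hrank : finrank K X = finrank K Y + 1)
    (hY : Disjoint Y B) (hX : ¬ Disjoint X B) : finrank K ↥(X ⊓ B) = 1 := by
  have hle := finrank_add_finrank_le_of_disjoint_of_le hYX (inf_le_left : X ⊓ B ≤ X)
    (hY.mono_right inf_le_right)
  have hne : X ⊓ B ≠ ⊥ := fun h => hX (disjoint_iff.2 h)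
  have := Submodule.one_le_finrank_iff.2 hne
  lia

theorem le_sup_of_not_disjoint (hYX : Y ≤ X) (hrank : finrank K X = finrank K Y + 1)
    (hY : Disjoint Y B) (hX : ¬ Disjoint X B) : X ≤ Y ⊔ B := by
  have hlt : Y < Y ⊔ X ⊓ B := by
    refine left_lt_sup.2 fun h => hX (disjoint_iff.2 (le_bot_iff.1 ?_))
    exact hY h inf_le_right
  have hle := sup_le hYX (inf_le_left : X ⊓ B ≤ X)
  rw [← Submodule.eq_of_le_of_finrank_le hle
    (hrank.trans_le (Submodule.finrank_lt_finrank_of_lt hlt))]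
  exact sup_le_sup_left inf_le_right Y

theorem existsUnique_le_le_not_disjoint (hAB : A ≤ B) (hX : finrank K ↥(X ⊓ B) = 1)
    (hXA : Disjoint X A) :
    ∃! Y : Submodule K V, (A ≤ Y ∧ Y ≤ B ∧ finrank K Y = finrank K A + 1) ∧ ¬ Disjoint X Y := by
  have hrank : finrank K ↥(A ⊔ X ⊓ B) = finrank K A + 1 := by
    have := Submodule.finrank_sup_add_finrank_inf_eq A (X ⊓ B)
    rwa [(hXA.symm.mono_right inf_le_left).eq_bot, finrank_bot, add_zero, hX] at this
  have hline_ne : X ⊓ B ≠ ⊥ := Submodule.one_le_finrank_iff.1 hX.ge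
  refine ⟨A ⊔ X ⊓ B, ⟨⟨le_sup_left, sup_le hAB inf_le_right, hrank⟩, fun h => hline_ne ?_⟩, ?_⟩
  · exact disjoint_self.1 (h.mono inf_le_left le_sup_right)
  · rintro Y ⟨⟨hAY, hYB, hY⟩, hXY⟩
    have hinf : X ⊓ Y = X ⊓ B := by
      refine Submodule.eq_of_le_of_finrank_le (inf_le_inf_left X hYB) ?_
      rw [hX, Submodule.one_le_finrank_iff]
      exact fun h => hXY (disjoint_iff.2 h)
    have hle : A ⊔ X ⊓ B ≤ Y := sup_le hAY (hinf ▸ inf_le_right)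
    exact (Submodule.eq_of_le_of_finrank_eq hle (by rw [hrank, hY])).symm

theorem not_disjoint_of_finrank_lt (hA : A ≤ Y) (hB : B ≤ Y)
    (h : finrank K Y < finrank K A + finrank K B) : ¬ Disjoint A B :=
  fun hAB => h.not_ge (finrank_add_finrank_le_of_disjoint_of_le hA hB hAB)

theorem finrank_inf_add_one_of_ne (hA : A ≤ Y) (hB : B ≤ Y) (hne : A ≠ B)
    (hrankA : finrank K Y = finrank K A + 1) (hrankB : finrank K Y = finrank K B + 1) :
    finrank K ↥(A ⊓ B) + 1 = finrank K A := by
  have hlt : A < A ⊔ B := by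
    refine le_sup_left.lt_of_ne fun h => hne ?_
    exact (Submodule.eq_of_le_of_finrank_eq (le_sup_right.trans h.ge) (by lia)).symm
  have := Submodule.finrank_lt_finrank_of_lt hlt
  have := Submodule.finrank_mono (sup_le hA hB)
  have := Submodule.finrank_sup_add_finrank_inf_eq A B
  lia

theorem exists_monotone_le_finrank_eq {Z : ℕ → Submodule K V} (hZ : Monotone Z)
    {d : ℕ → ℕ} (hd : Monotone d) (h : ∀ k, d k ≤ finrank K (Z k)) :
    ∃ Y : ℕ → Submodule K V, Monotone Y ∧ ∀ k, Y k ≤ Z k ∧ finrank K (Y k) = d k := by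
  have hnext (k : ℕ) (Y : {Y : Submodule K V // Y ≤ Z k ∧ finrank K Y = d k}) :
      ∃ Y' : {Y : Submodule K V // Y ≤ Z (k + 1) ∧ finrank K Y = d (k + 1)}, Y.1 ≤ Y'.1 := by
    obtain ⟨Y', hYY', hY'⟩ := exists_le_le_finrank_eq (Y.2.1.trans (hZ k.le_succ))
      (Y.2.2.trans_le (hd k.le_succ)) (h (k + 1))
    exact ⟨⟨Y', hY'⟩, hYY'⟩
  choose next hnext using hnext
  obtain ⟨Y₀, -, hY₀⟩ := exists_le_le_finrank_eq (bot_le : ⊥ ≤ Z 0) (by simp) (h 0)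
  let Y (k : ℕ) : {Y : Submodule K V // Y ≤ Z k ∧ finrank K Y = d k} := Nat.rec ⟨Y₀, hY₀⟩ next k
  exact ⟨fun k => (Y k).1, monotone_nat_of_le_succ fun k => hnext k (Y k), fun k => (Y k).2⟩

theorem finrank_comap_mkQ (A : Submodule K V) (H : Submodule K (V ⧸ A)) :
    finrank K (H.comap A.mkQ) = finrank K H + finrank K A := by
  have hquot := (Submodule.quotientQuotientEquivQuotient A _ (A.le_comap_mkQ H)).finrank_eq
  rw [Submodule.map_comap_eq_of_surjective A.mkQ_surjective] at hquot
  have := Submodule.finrank_quotient_add_finrank A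
  have := Submodule.finrank_quotient_add_finrank H
  have := Submodule.finrank_quotient_add_finrank (H.comap A.mkQ)
  lia

end Subspaces

theorem card_submodules_between {K V : Type*} [Field K] [Finite K] [AddCommGroup V] [Module K V]
    [FiniteDimensional K V] {A B : Submodule K V} (hAB : A ≤ B)
    (hrank : finrank K B = finrank K A + 2) :
    Nat.card {Y : Submodule K V // A ≤ Y ∧ Y ≤ B ∧ finrank K Y = finrank K A + 1} =
      Nat.card K + 1 := by
  let A' := A.submoduleOf B
  have hmap {Y : Submodule K V} (hY : Y ≤ B) : (Y.submoduleOf B).map B.subtype = Y :=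
    (Submodule.map_comap_subtype B Y).trans (inf_eq_right.2 hY)
  have hA' : finrank K A' = finrank K A := (Submodule.submoduleOfEquivOfLe hAB).finrank_eq
  have hquot : finrank K (B ⧸ A') = 2 := by
    have := Submodule.finrank_quotient_add_finrank A'
    lia
  let lift (H : {H : Submodule K (B ⧸ A') // finrank K H = 1}) :
      {Y : Submodule K V // A ≤ Y ∧ Y ≤ B ∧ finrank K Y = finrank K A + 1} :=
    ⟨(H.1.comap A'.mkQ).map B.subtype,
      (hmap hAB).symm.trans_le (Submodule.map_mono (A'.le_comap_mkQ H.1)),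
      B.map_subtype_le _, by
        rw [Submodule.finrank_map_subtype_eq, finrank_comap_mkQ, H.2, hA', add_comm]⟩
  have hlift : lift.Bijective := by
    refine ⟨fun H H' h => Subtype.ext (Submodule.comap_injective_of_surjective A'.mkQ_surjective
      (Submodule.map_injective_of_injective B.injective_subtype (congrArg Subtype.val h))), ?_⟩
    rintro ⟨Y, hAY, hYB, hY⟩
    have hcomap : ((Y.submoduleOf B).map A'.mkQ).comap A'.mkQ = Y.submoduleOf B := by
      rw [Submodule.comap_map_mkQ, sup_eq_right]
      exact Submodule.comap_mono hAY
    have hrankY := finrank_comap_mkQ A' ((Y.submoduleOf B).map A'.mkQ)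
    rw [hcomap, (Submodule.submoduleOfEquivOfLe hYB).finrank_eq, hA'] at hrankY
    refine ⟨⟨(Y.submoduleOf B).map A'.mkQ, by lia⟩, Subtype.ext ?_⟩
    exact (congrArg (Submodule.map B.subtype) hcomap).trans (hmap hYB)
  rw [← Projectivization.card_of_finrank_two K (B ⧸ A') hquot,
    Nat.card_congr (Projectivization.equivSubmodule K (B ⧸ A')),
    Nat.card_eq_of_bijective lift hlift]

/-- A complete flag of subspaces of `V`. The flag is indexed by all of `ℕ`, being constantly `V`
from index `dim V` on, so that neighbouring indices `i - 1` and `i + 1` always make sense. -/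
@[ext]
structure CompleteFlag (K V : Type*) [DivisionRing K] [AddCommGroup V] [Module K V] where
  space : ℕ → Submodule K V
  finrank_space : ∀ k, finrank K (space k) = min k (finrank K V)
  monotone_space : Monotone space

namespace CompleteFlag

section Basic

variable {K V : Type*} [DivisionRing K] [AddCommGroup V] [Module K V]

instance : CoeFun (CompleteFlag K V) fun _ => ℕ → Submodule K V := ⟨space⟩

theorem finrank_apply (U : CompleteFlag K V) {k : ℕ} (hk : k ≤ finrank K V) :
    finrank K (U k) = k := by
  rw [U.finrank_space, min_eq_left hk]

theorem mono (U : CompleteFlag K V) {k l : ℕ} (h : k ≤ l) : U k ≤ U l :=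
  U.monotone_space h

/-- Two complete flags are `i`-adjacent if they agree except possibly in dimension `i`. -/
def Adj (i : ℕ) (U W : CompleteFlag K V) : Prop :=
  ∀ k, k ≠ i → U k = W k

theorem adj_equivalence (i : ℕ) : Equivalence (Adj (K := K) (V := V) i) where
  refl _ _ _ := rfl
  symm h k hk := (h k hk).symm
  trans h h' k hk := (h k hk).trans (h' k hk)

theorem Adj.eq {i : ℕ} {U W : CompleteFlag K V} (h : Adj i U W) (hi : U i = W i) : U = W := by
  ext1
  funext k
  obtain rfl | hk := eq_or_ne k i
  exacts [hi, h k hk]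

theorem exists_adj_apply_eq (U : CompleteFlag K V) {i : ℕ} {Y : Submodule K V}
    (hY : finrank K Y = min i (finrank K V)) (hl : U (i - 1) ≤ Y) (hr : Y ≤ U (i + 1)) :
    ∃ W : CompleteFlag K V, Adj i W U ∧ W i = Y := by
  refine ⟨⟨Function.update U i Y, fun k => ?_, monotone_nat_of_le_succ fun k => ?_⟩,
    fun k hk => Function.update_of_ne hk _ _, Function.update_self _ _ _⟩
  · obtain rfl | hk := eq_or_ne k i
    · rwa [Function.update_self]
    · rw [Function.update_of_ne hk, U.finrank_space]
  · obtain rfl | hk := eq_or_ne k i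
    · rwa [Function.update_self, Function.update_of_ne k.succ_ne_self]
    rw [Function.update_of_ne hk]
    obtain rfl | hk' := eq_or_ne (k + 1) i
    · rwa [Function.update_self]
    · rw [Function.update_of_ne hk']
      exact U.mono k.le_succ

variable [FiniteDimensional K V]

theorem apply_zero (U : CompleteFlag K V) : U 0 = ⊥ :=
  Submodule.finrank_eq_zero.1 (U.finrank_apply (Nat.zero_le _))

theorem apply_eq_top (U : CompleteFlag K V) {k : ℕ} (hk : finrank K V ≤ k) : U k = ⊤ :=
  Submodule.eq_top_of_finrank_eq (by rw [U.finrank_space, min_eq_right hk])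

theorem mem_Ico_of_apply_ne {U W : CompleteFlag K V} {i : ℕ} (h : U i ≠ W i) :
    i ∈ Finset.Ico 1 (finrank K V) := by
  refine Finset.mem_Ico.2 ⟨Nat.one_le_iff_ne_zero.2 ?_, lt_of_not_ge fun hi => h ?_⟩
  · rintro rfl
    exact h (U.apply_zero.trans W.apply_zero.symm)
  · rw [U.apply_eq_top hi, W.apply_eq_top hi]

theorem Adj.eq_of_notMem {i : ℕ} (hi : i ∉ Finset.Ico 1 (finrank K V)) {U W : CompleteFlag K V}
    (h : Adj i U W) : U = W :=
  h.eq (by_contra fun hne => hi (mem_Ico_of_apply_ne hne))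

instance [Finite K] : Finite (CompleteFlag K V) := by
  have : Finite V := Module.finite_of_finite K
  refine Finite.of_injective (fun (U : CompleteFlag K V) (k : Fin (finrank K V)) => U k)
    fun U W h => ?_
  ext1
  funext k
  obtain hk | hk := lt_or_ge k (finrank K V)
  · exact congrFun h ⟨k, hk⟩
  · rw [U.apply_eq_top hk, W.apply_eq_top hk]

theorem exists_extension {J : Set ℕ} {P : ℕ → Submodule K V} (hP : MonotoneOn P J)
    (hdim : ∀ k ∈ J, finrank K (P k) = min k (finrank K V)) :
    ∃ U : CompleteFlag K V, ∀ k ∈ J, U k = P k := by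
  let Z (k : ℕ) : Submodule K V := ⨅ b ∈ J, ⨅ _ : k ≤ b, P b
  have hZ_le {k b : ℕ} (hb : b ∈ J) (hk : k ≤ b) : Z k ≤ P b :=
    iInf₂_le_of_le b hb (iInf_le_of_le hk le_rfl)
  have hZ : Monotone Z := fun k l hkl => le_iInf₂ fun b hb => le_iInf fun h =>
    hZ_le hb (hkl.trans h)
  have hdimZ (k : ℕ) : min k (finrank K V) ≤ finrank K (Z k) := by
    classical
    by_cases h : ∃ b, b ∈ J ∧ k ≤ b
    · obtain ⟨hfind, hk⟩ := Nat.find_spec h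
      have hle : P (Nat.find h) ≤ Z k := le_iInf₂ fun b hb => le_iInf fun hkb =>
        hP hfind hb (Nat.find_min' h ⟨hb, hkb⟩)
      have := Submodule.finrank_mono hle
      rw [hdim _ hfind] at this
      lia
    · have : Z k = ⊤ := top_unique (le_iInf₂ fun b hb => le_iInf fun hk => absurd ⟨b, hb, hk⟩ h)
      rw [this, finrank_top]
      exact min_le_right _ _
  obtain ⟨Y, hY, hYZ⟩ := exists_monotone_le_finrank_eq hZ
    (monotone_id.min monotone_const) hdimZ
  refine ⟨⟨Y, fun k => (hYZ k).2, hY⟩, fun k hk => ?_⟩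
  exact Submodule.eq_of_le_of_finrank_eq ((hYZ k).1.trans (hZ_le hk le_rfl))
    ((hYZ k).2.trans (hdim k hk).symm)

theorem exists_apply_eq_of_le_apply_succ (U : CompleteFlag K V) {m : ℕ} {Y : Submodule K V}
    (hY : finrank K Y = min m (finrank K V)) (hle : Y ≤ U (m + 1)) :
    ∃ W : CompleteFlag K V, W m = Y ∧ ∀ k, m < k → W k = U k := by
  have hmono : MonotoneOn (Function.update U m Y) (Set.Ici m) := by
    intro k hk l _ hkl
    obtain rfl | hl := hkl.eq_or_lt
    · exact le_rfl
    rw [Function.update_of_ne (hk.trans_lt hl).ne']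
    obtain rfl | hk := (Set.mem_Ici.1 hk).eq_or_lt
    · rw [Function.update_self]
      exact hle.trans (U.mono hl)
    · rw [Function.update_of_ne hk.ne']
      exact U.mono hkl
  have hdim (k : ℕ) : finrank K (Function.update U m Y k) = min k (finrank K V) := by
    obtain rfl | hk := eq_or_ne k m
    · rwa [Function.update_self]
    · rw [Function.update_of_ne hk, U.finrank_space]
  obtain ⟨W, hW⟩ := exists_extension hmono fun k _ => hdim k
  refine ⟨W, ?_, fun k hk => ?_⟩
  · rw [hW m Set.self_mem_Ici, Function.update_self]
  · rw [hW k hk.le, Function.update_of_ne hk.ne']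

theorem exists_adj_of_forall_gt {U W : CompleteFlag K V} {m : ℕ} (h : ∀ k, m < k → U k = W k) :
    ∃ U' W' : CompleteFlag K V,
      (∀ k, m ≤ k → U k = U' k) ∧ (∀ k, m ≤ k → W' k = W k) ∧ Adj m W' U' := by
  obtain hUW | hUW := eq_or_ne (U m) (W m)
  · refine ⟨U, U, fun _ _ => rfl, fun k hk => ?_, fun _ _ => rfl⟩
    obtain rfl | hk := hk.eq_or_lt
    exacts [hUW, h k hk]
  obtain ⟨hm, hmN⟩ := Finset.mem_Ico.1 (mem_Ico_of_apply_ne hUW)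
  obtain ⟨l, rfl⟩ := Nat.exists_eq_add_of_le' hm
  have hWU : W (l + 1) ≤ U (l + 1 + 1) :=
    (W.mono (Nat.le_succ _)).trans (h _ (Nat.lt_succ_self _)).ge
  have hrank : finrank K ↥(U (l + 1) ⊓ W (l + 1)) + 1 = finrank K (U (l + 1)) :=
    finrank_inf_add_one_of_ne (U.mono (Nat.le_succ _)) hWU hUW
      (by rw [U.finrank_apply hmN, U.finrank_apply hmN.le])
      (by rw [U.finrank_apply hmN, W.finrank_apply hmN.le])
  rw [U.finrank_apply hmN.le] at hrank
  obtain ⟨U', hU'l, hU'⟩ := U.exists_apply_eq_of_le_apply_succ (m := l)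
    (Y := U (l + 1) ⊓ W (l + 1)) (by lia) inf_le_left
  obtain ⟨W', hadj, hW'⟩ := U'.exists_adj_apply_eq (W.finrank_space (l + 1))
    (hU'l.trans_le inf_le_right) (hWU.trans (hU' _ (by lia)).ge)
  refine ⟨U', W', fun k hk => (hU' k hk).symm, fun k hk => ?_, hadj⟩
  obtain rfl | hk := hk.eq_or_lt
  · exact hW'
  · rw [hadj k hk.ne', hU' k (by lia), h k hk]

theorem apply_eq_of_forall_adj {α : Type*} {f : CompleteFlag K V → α}
    (hf : ∀ i ∈ Finset.Ico 1 (finrank K V), ∀ U W, Adj i U W → f U = f W)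
    (U W : CompleteFlag K V) : f U = f W := by
  have key (m : ℕ) (U W : CompleteFlag K V) (h : ∀ k, m ≤ k → U k = W k) : f U = f W := by
    induction m generalizing U W with
    | zero => rw [show U = W from CompleteFlag.ext (funext fun k => h k k.zero_le)]
    | succ m ih =>
      obtain ⟨U', W', hU, hW, hadj⟩ := exists_adj_of_forall_gt h
      have hU'W' : f W' = f U' := by
        by_cases hm : m ∈ Finset.Ico 1 (finrank K V)
        · exact hf m hm _ _ hadj
        · rw [hadj.eq_of_notMem hm]
      rw [ih U U' hU, ← hU'W', ih W' W hW]
  exact key (finrank K V) U W fun k hk => by rw [U.apply_eq_top hk, W.apply_eq_top hk]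

theorem exists_basis (U : CompleteFlag K V) : ∃ b : Basis (Fin (finrank K V)) K V,
    ∀ k, U k = Submodule.span K (b '' {i | (i : ℕ) < k}) := by
  have hlt (i : Fin (finrank K V)) : U i < U (i + 1) := by
    refine (U.mono i.1.le_succ).lt_of_ne fun h => ?_
    have := congrArg (fun Y : Submodule K V => finrank K Y) h
    simp only [finrank_space] at this
    lia
  choose e he he' using fun i => SetLike.exists_of_lt (hlt i)
  have hspan (k : ℕ) : U k = Submodule.span K (e '' {i | (i : ℕ) < k}) := by
    induction k with
    | zero => simp [apply_zero]
    | succ k ih =>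
      obtain hk | hk := lt_or_ge k (finrank K V)
      · have hset : {i : Fin (finrank K V) | (i : ℕ) < k + 1} =
            {i : Fin (finrank K V) | (i : ℕ) < k} ∪ {⟨k, hk⟩} := by
          ext i
          simp [Fin.ext_iff, le_iff_eq_or_lt]
        rw [hset, Set.image_union, Submodule.span_union, ← ih, Set.image_singleton]
        refine (Submodule.eq_of_le_of_finrank_eq (sup_le (U.mono k.le_succ) ?_) ?_).symm
        · exact (Submodule.span_singleton_le_iff_mem _ _).2 (he ⟨k, hk⟩)
        · rw [Submodule.finrank_sup_span_singleton (he' ⟨k, hk⟩), U.finrank_apply hk,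
            U.finrank_apply hk.le]
      · rw [U.apply_eq_top (hk.trans k.le_succ), ← U.apply_eq_top hk, ih]
        congr 2
        ext i
        simp only [Set.mem_ofPred_eq]
        lia
  have htop : ⊤ ≤ Submodule.span K (Set.range e) := by
    rw [← U.apply_eq_top le_rfl, hspan]
    exact Submodule.span_mono (Set.image_subset_range _ _)
  exact ⟨basisOfTopLeSpanOfCardEqFinrank e htop (by simp), by simpa using hspan⟩

/-- The action of a linear automorphism on complete flags. -/
def mapEquiv (g : V ≃ₗ[K] V) : CompleteFlag K V ≃ CompleteFlag K V where
  toFun U := ⟨fun k => (U k).map (g : V →ₗ[K] V),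
    fun k => by rw [LinearEquiv.finrank_map_eq, U.finrank_space],
    fun _ _ h => Submodule.map_mono (U.mono h)⟩
  invFun U := ⟨fun k => (U k).map (g.symm : V →ₗ[K] V),
    fun k => by rw [LinearEquiv.finrank_map_eq, U.finrank_space],
    fun _ _ h => Submodule.map_mono (U.mono h)⟩
  left_inv U := by ext1; funext k; simp [← Submodule.map_comp]
  right_inv U := by ext1; funext k; simp [← Submodule.map_comp]

theorem exists_mapEquiv_eq (U W : CompleteFlag K V) : ∃ g : V ≃ₗ[K] V, mapEquiv g U = W := by
  obtain ⟨b, hb⟩ := U.exists_basis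
  obtain ⟨b', hb'⟩ := W.exists_basis
  refine ⟨b.equiv b' (Equiv.refl _), CompleteFlag.ext (funext fun k => ?_)⟩
  simp only [mapEquiv, Equiv.coe_fn_mk, hb k, hb' k, Submodule.map_span, ← Set.image_comp]
  congr 2
  funext i
  simp

end Basic

section Opposition

variable {K V : Type*} [DivisionRing K] [AddCommGroup V] [Module K V]

/-- Two complete flags of `V` are opposite if their members of complementary dimensions are
complementary subspaces. -/
def Opposite (U W : CompleteFlag K V) : Prop :=
  ∀ a b, a + b = finrank K V → Disjoint (U a) (W b)

theorem Opposite.symm {U W : CompleteFlag K V} (h : Opposite U W) : Opposite W U :=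
  fun a b hab => (h b a (by lia)).symm

/-- Relative position of two complete flags at the wall of type `i` next to opposition: changing
the `i`-th member of the second flag suitably makes them opposite. -/
def AlmostOpposite (i : ℕ) (U W : CompleteFlag K V) : Prop :=
  ∀ a b, a + b = finrank K V → (Disjoint (U a) (W b) ↔ b ≠ i)

theorem almostOpposite_comm {i j : ℕ} (hij : i + j = finrank K V) {U W : CompleteFlag K V} :
    AlmostOpposite i U W ↔ AlmostOpposite j W U := by
  refine ⟨fun h a b hba => ?_, fun h a b hba => ?_⟩
  · rw [disjoint_comm, h b a (by lia)]; lia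
  · rw [disjoint_comm, h b a (by lia)]; lia

/-- The second flag agrees with the first in dimensions at least `m`, and below that the two are
opposite as complete flags of their common `m`-dimensional member. -/
def OppositeBelow (m : ℕ) (U W : CompleteFlag K V) : Prop :=
  (∀ k, m ≤ k → W k = U k) ∧ ∀ a b, a + b = m → Disjoint (U a) (W b)

/-- The relative positions met on the way from `OppositeBelow m` to `OppositeBelow (m + 1)` when
the members of the second flag are changed one at a time, in dimensions `m, m - 1, …, 1`. Members
in dimensions above `l` are already in their new position, those in dimensions at most `j` are
still in the old one, so that `l = j + 1` leaves the member of dimension `j + 1` undetermined. -/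
def OppositeBetween (m j l : ℕ) (U W : CompleteFlag K V) : Prop :=
  (∀ k, m < k → W k = U k) ∧ (∀ a b, l < b → a + b = m + 1 → Disjoint (U a) (W b)) ∧
    (∀ a b, b ≤ j → a + b = m → Disjoint (U a) (W b)) ∧ W j ≤ U m

theorem oppositeBetween_and_disjoint_iff {m j p : ℕ} (hm : p + (j + 1) = m)
    {U W : CompleteFlag K V} :
    OppositeBetween m j (j + 1) U W ∧ Disjoint (U (p + 1)) (W (j + 1)) ↔
      OppositeBetween m j j U W := by
  refine ⟨fun ⟨⟨hgt, hnew, hold⟩, hdisj⟩ => ⟨hgt, fun a b hb hab => ?_, hold⟩,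
    fun ⟨hgt, hnew, hold⟩ => ⟨⟨hgt, fun a b hb => hnew a b (by lia), hold⟩,
      hnew _ _ j.lt_succ_self (by lia)⟩⟩
  obtain rfl | hb := (Nat.succ_le_of_lt hb).eq_or_lt
  · rwa [show a = p + 1 by lia]
  · exact hnew a b hb hab

theorem Adj.oppositeBetween_iff {m j : ℕ} {U W W' : CompleteFlag K V} (h : Adj (j + 1) W' W)
    (hj : j < m) : OppositeBetween m j (j + 1) U W' ↔ OppositeBetween m j (j + 1) U W := by
  refine and_congr (forall₂_congr fun k hk => ?_) (and_congr (forall₃_congr fun a b hb => ?_)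
    (and_congr (forall₃_congr fun a b hb => ?_) ?_))
  · rw [h k (by lia)]
  · rw [h b (by lia)]
  · rw [h b (by lia)]
  · rw [h j (by lia)]

/-- The matrix of `i`-adjacency of distinct complete flags. -/
noncomputable def adjMatrix [DecidableEq (CompleteFlag K V)] (i : ℕ) :
    Matrix (CompleteFlag K V) (CompleteFlag K V) ℝ :=
  relMatrix (Adj i) - 1

theorem adjMatrix_transpose [DecidableEq (CompleteFlag K V)] (i : ℕ) :
    (adjMatrix i : Matrix (CompleteFlag K V) _ ℝ)ᵀ = adjMatrix i := by
  rw [adjMatrix, transpose_sub, transpose_one,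
    relMatrix_transpose_of_symm fun _ _ => (adj_equivalence i).symm]

variable [FiniteDimensional K V]

theorem existsUnique_adj_not_disjoint {W : CompleteFlag K V} {i : ℕ}
    (hi : i ∈ Finset.Ico 1 (finrank K V)) {X Y : Submodule K V} (hYX : Y ≤ X)
    (hrank : finrank K X = finrank K Y + 1) (hY : Disjoint Y (W (i + 1)))
    (hX : ¬ Disjoint X (W (i + 1))) (hX' : Disjoint X (W (i - 1))) :
    ∃! W' : CompleteFlag K V, Adj i W' W ∧ ¬ Disjoint X (W' i) := by
  obtain ⟨hi, hiN⟩ := Finset.mem_Ico.1 hi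
  have hrankW : finrank K (W (i - 1)) + 1 = i := by rw [W.finrank_apply (by lia)]; lia
  obtain ⟨Z, ⟨⟨hlZ, hZr, hZ⟩, hXZ⟩, huniq⟩ := existsUnique_le_le_not_disjoint
    (W.mono (by lia : i - 1 ≤ i + 1)) (finrank_inf_eq_one hYX hrank hY hX) hX'
  obtain ⟨W', hadj, rfl⟩ := W.exists_adj_apply_eq (i := i) (by lia) hlZ hZr
  refine ⟨W', ⟨hadj, hXZ⟩, fun W'' ⟨hadj', hX''⟩ => ?_⟩
  refine ((adj_equivalence i).trans hadj' ((adj_equivalence i).symm hadj)).eq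
    (huniq _ ⟨⟨?_, ?_, ?_⟩, hX''⟩)
  · exact (hadj' (i - 1) (by lia)).ge.trans (W''.mono (by lia))
  · exact (W''.mono i.le_succ).trans (hadj' (i + 1) (by lia)).le
  · rw [W''.finrank_apply hiN.le, hrankW]

theorem oppositeBetween_zero_iff {m : ℕ} {U W : CompleteFlag K V} :
    OppositeBetween m 0 0 U W ↔ OppositeBelow (m + 1) U W := by
  refine ⟨fun ⟨hgt, hnew, _⟩ => ⟨hgt, fun a b hab => ?_⟩, fun ⟨hgt, hopp⟩ =>
    ⟨hgt, fun a b _ hab => hopp a b hab, fun a b hb _ => ?_, ?_⟩⟩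
  · obtain rfl | hb := b.eq_zero_or_pos
    · simp [apply_zero]
    · exact hnew a b hb hab
  · simp [Nat.le_zero.1 hb, apply_zero]
  · simp [apply_zero]

theorem oppositeBetween_self_iff {m : ℕ} {U W : CompleteFlag K V} :
    OppositeBetween m m m U W ↔ OppositeBelow m U W := by
  refine ⟨fun ⟨hgt, _, hold, hle⟩ => ⟨fun k hk => ?_, fun a b hab => hold a b (by lia) hab⟩,
    fun ⟨hge, hopp⟩ => ⟨fun k hk => hge k hk.le, fun a b hb hab => ?_,
      fun a b _ hab => hopp a b hab, (hge m le_rfl).le⟩⟩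
  · obtain rfl | hk := hk.eq_or_lt
    · exact Submodule.eq_of_le_of_finrank_eq hle (by rw [finrank_space, finrank_space])
    · exact hgt k hk
  · simp [show a = 0 by lia, apply_zero]

theorem oppositeBetween_and_not_disjoint_iff {m j p : ℕ} (hm : p + (j + 1) = m)
    (hmN : m < finrank K V) {U W : CompleteFlag K V} :
    OppositeBetween m j (j + 1) U W ∧ ¬ Disjoint (U (p + 1)) (W (j + 1)) ↔
      OppositeBetween m (j + 1) (j + 1) U W := by
  refine ⟨fun ⟨⟨hgt, hnew, hold, hle⟩, hmeet⟩ => ⟨hgt, hnew, fun a b hb hab => ?_, ?_⟩,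
    fun ⟨hgt, hnew, hold, hle⟩ => ⟨⟨hgt, hnew, fun a b hb => hold a b (by lia),
      (W.mono j.le_succ).trans hle⟩, ?_⟩⟩
  · obtain hb | rfl := Nat.le_succ_iff.1 hb
    · exact hold a b hb hab
    · exact (hnew a (j + 2) (by lia) (by lia)).mono_right (W.mono (Nat.le_succ _))
  · have hsup := le_sup_of_not_disjoint (W.mono j.le_succ)
      (by rw [W.finrank_apply (by lia), W.finrank_apply (by lia)])
      (hold (p + 1) j le_rfl (by lia)).symm (disjoint_comm.not.1 hmeet)
    exact hsup.trans (sup_le hle (U.mono (by lia)))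
  · refine not_disjoint_of_finrank_lt (U.mono (by lia)) hle ?_
    rw [U.finrank_apply (by lia), U.finrank_apply (by lia), W.finrank_apply (by lia)]
    lia

theorem existsUnique_adj_of_oppositeBetween {m j p : ℕ} (hm : p + (j + 1) = m)
    (hmN : m < finrank K V) {U W : CompleteFlag K V} (h : OppositeBetween m j (j + 1) U W) :
    ∃! W', Adj (j + 1) W' W ∧ ¬ Disjoint (U (p + 1)) (W' (j + 1)) := by
  obtain ⟨hgt, hnew, hold, -⟩ := h
  refine existsUnique_adj_not_disjoint (Finset.mem_Ico.2 ⟨by lia, by lia⟩) (U.mono p.le_succ)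
    ?_ (hnew p (j + 2) (by lia) (by lia)) ?_ (hold _ _ le_rfl (by lia))
  · rw [U.finrank_apply (by lia), U.finrank_apply (by lia)]
  · refine not_disjoint_of_finrank_lt (Y := U (m + 1)) (U.mono (by lia))
      ((W.mono (by lia)).trans (hgt _ m.lt_succ_self).le) ?_
    rw [U.finrank_apply (by lia), U.finrank_apply (by lia), W.finrank_apply (by lia)]
    lia

variable [Fintype (CompleteFlag K V)] [DecidableEq (CompleteFlag K V)]

theorem relMatrix_opposite_eq_mul {i : ℕ} (hi : i ∈ Finset.Ico 1 (finrank K V)) :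
    relMatrix (Opposite (K := K) (V := V)) = relMatrix (AlmostOpposite i) * adjMatrix i := by
  obtain ⟨hi', hiN⟩ := Finset.mem_Ico.1 hi
  obtain ⟨m, hm⟩ := Nat.exists_eq_add_of_lt hiN
  have hindex {a : ℕ} (ha : a + i = finrank K V) : a = m + 1 := by lia
  have hmul := relMatrix_and_eq_mul (r := Adj (K := K) (V := V) i)
    (P := fun U W => ∀ a b, a + b = finrank K V → b ≠ i → Disjoint (U a) (W b))
    (Q := fun U W => Disjoint (U (m + 1)) (W i))
    (fun U W W' h => forall₄_congr fun a b _ hb => by rw [h b hb]) fun U W h => ?_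
  · rw [adjMatrix]
    convert hmul using 1
    · refine relMatrix_congr fun U W =>
        ⟨fun h => ⟨fun a b hab _ => h a b hab, h _ _ (by lia)⟩, fun h a b hab => ?_⟩
      obtain rfl | hb := eq_or_ne b i
      · exact hindex hab ▸ h.2
      · exact h.1 a b hab hb
    · congr 1
      refine relMatrix_congr fun U W =>
        ⟨fun h => ⟨fun a b hab => (h a b hab).2, fun hd => ?_⟩, fun h a b hab => ?_⟩
      · exact (h _ i (by lia)).1 hd rfl
      · obtain rfl | hb := eq_or_ne b i
        · simpa [hindex hab] using h.2
        · simpa [hb] using h.1 a b hab hb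
  · refine existsUnique_adj_not_disjoint hi (U.mono m.le_succ) ?_ (h m (i + 1) (by lia) (by lia))
      ?_ ((h (m + 2) (i - 1) (by lia) (by lia)).mono_left (U.mono (by lia)))
    · rw [U.finrank_apply (by lia), U.finrank_apply (by lia)]
    · refine not_disjoint_of_finrank_lt (Y := ⊤) le_top le_top ?_
      rw [U.finrank_apply (by lia), W.finrank_apply (by lia), finrank_top]
      lia

theorem relMatrix_opposite_mul_adjMatrix {i j : ℕ} (hi : i ∈ Finset.Ico 1 (finrank K V))
    (hij : i + j = finrank K V) :
    relMatrix (Opposite (K := K) (V := V)) * adjMatrix i =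
      adjMatrix j * relMatrix (Opposite (K := K) (V := V)) := by
  have hj : j ∈ Finset.Ico 1 (finrank K V) := by
    rw [Finset.mem_Ico] at hi ⊢
    lia
  have hleft : relMatrix (Opposite (K := K) (V := V)) =
      adjMatrix j * relMatrix (AlmostOpposite i) := by
    rw [← relMatrix_transpose_of_symm fun _ _ => Opposite.symm, relMatrix_opposite_eq_mul hj,
      transpose_mul, adjMatrix_transpose, relMatrix_transpose,
      relMatrix_congr fun U W => (almostOpposite_comm hij).symm]
  conv_lhs => rw [hleft, Matrix.mul_assoc, ← relMatrix_opposite_eq_mul hi]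

theorem relMatrix_oppositeBetween_eq_mul {m j : ℕ} (hj : j < m) (hmN : m < finrank K V) :
    relMatrix (OppositeBetween (K := K) (V := V) m j j) =
      relMatrix (OppositeBetween m (j + 1) (j + 1)) * adjMatrix (j + 1) := by
  obtain ⟨p, hp⟩ := Nat.exists_eq_add_of_le' (Nat.succ_le_of_lt hj)
  rw [relMatrix_congr fun U W => (oppositeBetween_and_disjoint_iff hp.symm).symm,
    relMatrix_congr fun U W => (oppositeBetween_and_not_disjoint_iff hp.symm hmN).symm]
  exact relMatrix_and_eq_mul (fun _ _ _ h => h.oppositeBetween_iff hj) fun _ _ h =>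
    existsUnique_adj_of_oppositeBetween hp.symm hmN h

theorem relMatrix_oppositeBelow {m : ℕ} (hm : m ≤ finrank K V) :
    relMatrix (OppositeBelow (K := K) (V := V) m) = longestWord adjMatrix m := by
  have hdesc (m j : ℕ) (hm : m < finrank K V) (hj : j ≤ m) :
      relMatrix (OppositeBetween (K := K) (V := V) m 0 0) =
        relMatrix (OppositeBetween m j j) * descendingProd adjMatrix j := by
    induction j with
    | zero => rw [descendingProd, Matrix.mul_one]
    | succ j ih => rw [ih (by lia), relMatrix_oppositeBetween_eq_mul hj hm, descendingProd,
        Matrix.mul_assoc]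
  induction m with
  | zero =>
    rw [longestWord, ← relMatrix_eq_one]
    refine relMatrix_congr fun U W =>
      ⟨fun h => CompleteFlag.ext (funext fun k => (h.1 k k.zero_le).symm), ?_⟩
    rintro rfl
    refine ⟨fun _ _ => rfl, fun a b hab => ?_⟩
    simp [show a = 0 by lia, apply_zero]
  | succ m ih =>
    rw [longestWord, ← ih (by lia), relMatrix_congr fun U W => oppositeBetween_zero_iff.symm,
      relMatrix_congr fun U W => oppositeBetween_self_iff.symm]
    exact hdesc m m hm le_rfl

theorem relMatrix_opposite :
    relMatrix (Opposite (K := K) (V := V)) = longestWord adjMatrix (finrank K V) := by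
  rw [← relMatrix_oppositeBelow le_rfl]
  refine relMatrix_congr fun U W => ⟨fun h => ⟨fun k hk => ?_, h⟩, fun h => h.2⟩
  rw [U.apply_eq_top hk, W.apply_eq_top hk]

end Opposition

theorem card_adj {K V : Type*} [Field K] [Finite K] [AddCommGroup V] [Module K V]
    [FiniteDimensional K V] {i : ℕ} (hi : i ∈ Finset.Ico 1 (finrank K V)) (U : CompleteFlag K V) :
    Nat.card {W // Adj i U W} = Nat.card K + 1 := by
  obtain ⟨hi, hiN⟩ := Finset.mem_Ico.1 hi
  have hrank : finrank K (U (i - 1)) + 1 = i := by rw [U.finrank_apply (by lia)]; lia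
  rw [← card_submodules_between (U.mono (by lia : i - 1 ≤ i + 1))
    (by rw [U.finrank_apply (by lia)]; lia)]
  refine Nat.card_eq_of_bijective (fun W => ⟨W.1 i, ?_, ?_, ?_⟩) ⟨fun W W' h => ?_, ?_⟩
  · exact (W.2 (i - 1) (by lia)).trans_le (W.1.mono (by lia))
  · exact (W.1.mono i.le_succ).trans (W.2 (i + 1) (by lia)).ge
  · rw [W.1.finrank_apply hiN.le, hrank]
  · exact Subtype.ext (((adj_equivalence i).trans ((adj_equivalence i).symm W.2) W'.2).eq
      (congrArg Subtype.val h))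
  · rintro ⟨Y, hl, hr, hY⟩
    obtain ⟨W, hadj, rfl⟩ := U.exists_adj_apply_eq (i := i) (by lia) hl hr
    exact ⟨⟨W, (adj_equivalence i).symm hadj⟩, rfl⟩

section EKR

variable {K V : Type*} [Field K] [Finite K] [AddCommGroup V] [Module K V] [FiniteDimensional K V]

theorem isHeckeFamily_adjMatrix [Fintype (CompleteFlag K V)] [DecidableEq (CompleteFlag K V)] :
    IsHeckeFamily (Nat.card K : ℝ) (finrank K V)
      (adjMatrix : ℕ → Matrix (CompleteFlag K V) (CompleteFlag K V) ℝ) where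
  quadratic i hi := relMatrix_sub_one_mul_add_one (adj_equivalence i) fun U => by
    rw [card_adj hi, Nat.cast_succ]
  longestWord_mul i hi := by
    rw [← relMatrix_opposite, relMatrix_opposite_mul_adjMatrix hi]
    have := (Finset.mem_Ico.1 hi).2
    lia

theorem card_mul_one_add_sqrt_pow_le {C : Set (CompleteFlag K V)}
    (hC : ∀ U ∈ C, ∀ W ∈ C, ¬ Opposite U W) :
    (Nat.card C : ℝ) * (1 + √(Nat.card K) ^ finrank K V) ≤ Nat.card (CompleteFlag K V) := by
  classical
  have := Fintype.ofFinite (CompleteFlag K V)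
  have hcard (i : ℕ) (hi : i ∈ Finset.Ico 1 (finrank K V)) (U : CompleteFlag K V) :
      (Nat.card {W // Adj i U W} : ℝ) = Nat.card K + 1 := by
    rw [card_adj hi, Nat.cast_succ]
  rw [Nat.card_eq_fintype_card (α := CompleteFlag K V), Nat.card_eq_fintype_card (α := C),
    ← Set.toFinset_card]
  refine isHeckeFamily_adjMatrix.card_mul_one_add_sqrt_pow_le ?_ (fun i _ => adjMatrix_transpose i)
    ?_ (fun i hi => relMatrix_sub_one_mulVec_one (hcard i hi)) (fun f hf => ?_) fun U hU W hW => ?_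
  · exact_mod_cast Nat.card_pos (α := K)
  · rw [← relMatrix_opposite]
    exact relMatrix_transpose_of_symm fun _ _ => Opposite.symm
  · exact apply_eq_of_forall_adj fun i hi U W h =>
      eq_of_relMatrix_sub_one_mulVec_eq (adj_equivalence i) (by positivity) (hf i hi) h
  · rw [← relMatrix_opposite]
    exact relMatrix_apply_of_not (hC U (Set.mem_toFinset.1 hU) W (Set.mem_toFinset.1 hW))

end EKR

end CompleteFlag

theorem card_preimage_of_forall_fiber_equiv {X Y Z : Type*} {f : X → Y}
    (hf : ∀ y, Nonempty ({x // f x = y} ≃ Z)) (C : Set Y) :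
    Nat.card (f ⁻¹' C) = Nat.card C * Nat.card Z := by
  rw [← Nat.card_prod]
  exact Nat.card_congr <| (Equiv.sigmaSubtypeFiberEquivSubtype f fun _ => Iff.rfl).symm.trans <|
    Equiv.sigmaEquivProdOfEquiv fun y => (hf y.1).some

namespace FlagOfType

variable {F : Type} [Field F] {n : ℕ} {J : Finset ℕ}

theorem eq_of_U_eq {P Q : FlagOfType F n J} (h : ∀ k, P.U k = Q.U k) : P = Q := by
  obtain ⟨U, _, _⟩ := P
  obtain ⟨W, _, _⟩ := Q
  obtain rfl : U = W := funext h
  rfl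

theorem le_of_mem (P : FlagOfType F n J) {k : ℕ} (hk : k ∈ J) : k ≤ n + 1 := by
  simpa [P.dim ⟨k, hk⟩] using Submodule.finrank_le (P.U ⟨k, hk⟩)

/-- The subflag of type `J` of a complete flag. -/
def ofCompleteFlag (hJ : ∀ k ∈ J, k ≤ n + 1) (U : CompleteFlag F (Fin (n + 1) → F)) :
    FlagOfType F n J where
  U k := U k
  dim k := U.finrank_apply ((hJ k k.2).trans_eq (finrank_fin_fun F).symm)
  mono _ _ h := U.mono h

variable {hJ : ∀ k ∈ J, k ≤ n + 1}

theorem ofCompleteFlag_surjective : Function.Surjective (ofCompleteFlag (F := F) hJ) := by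
  intro P
  let Q (k : ℕ) : Submodule F (Fin (n + 1) → F) := if hk : k ∈ J then P.U ⟨k, hk⟩ else ⊥
  have hQ (k : J) : Q k = P.U k := dif_pos k.2
  have hmono : MonotoneOn Q J := fun k hk l hl hkl => by
    rw [hQ ⟨k, hk⟩, hQ ⟨l, hl⟩]
    exact P.mono _ _ hkl
  obtain ⟨U, hU⟩ := CompleteFlag.exists_extension hmono fun k hk => by
    rw [hQ ⟨k, hk⟩, P.dim, finrank_fin_fun, min_eq_left (hJ k hk)]
  exact ⟨U, eq_of_U_eq fun k => (hU k k.2).trans (hQ k)⟩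

theorem nonempty_equiv_ofCompleteFlag_fiber (P Q : FlagOfType F n J) :
    Nonempty ({U // ofCompleteFlag hJ U = P} ≃ {U // ofCompleteFlag hJ U = Q}) := by
  obtain ⟨U, rfl⟩ := ofCompleteFlag_surjective (hJ := hJ) P
  obtain ⟨W, rfl⟩ := ofCompleteFlag_surjective (hJ := hJ) Q
  obtain ⟨g, rfl⟩ := CompleteFlag.exists_mapEquiv_eq U W
  have hmap (X : CompleteFlag F (Fin (n + 1) → F)) (k : ℕ) :
      X k = U k ↔ CompleteFlag.mapEquiv g X k = CompleteFlag.mapEquiv g U k :=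
    (Submodule.map_injective_of_injective (f := g.toLinearMap) g.injective).eq_iff.symm
  have hiff (X Y : CompleteFlag F (Fin (n + 1) → F)) :
      ofCompleteFlag hJ X = ofCompleteFlag hJ Y ↔ ∀ k : J, X k = Y k :=
    ⟨fun h k => congrArg (fun P => P.U k) h, fun h => eq_of_U_eq h⟩
  exact ⟨(CompleteFlag.mapEquiv g).subtypeEquiv fun X => by simp only [hiff, hmap X]⟩

theorem opposite_ofCompleteFlag {U W : CompleteFlag F (Fin (n + 1) → F)}
    (h : CompleteFlag.Opposite U W) : (ofCompleteFlag hJ U).Opposite (ofCompleteFlag hJ W) :=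
  fun k l hl => (h k l (by rw [finrank_fin_fun, hl, Nat.add_sub_of_le (hJ k k.2)])).eq_bot

end FlagOfType

theorem EKR_flags_of_type_bound_general {n : ℕ} {F : Type} [Field F] [Finite F] {J : Finset ℕ}
    {C : Set (FlagOfType F n J)} (hC : ∀ P ∈ C, ∀ Q ∈ C, ¬ P.Opposite Q) :
    (Nat.card C : ℝ) * (1 + √(Nat.card F) ^ (n + 1)) ≤ Nat.card (FlagOfType F n J) := by
  obtain rfl | ⟨P, -⟩ := C.eq_empty_or_nonempty
  · simp
  have hJ (k : ℕ) : k ∈ J → k ≤ n + 1 := P.le_of_mem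
  let r := FlagOfType.ofCompleteFlag (F := F) hJ
  have hcard := card_preimage_of_forall_fiber_equiv (f := r) fun Q =>
    FlagOfType.nonempty_equiv_ofCompleteFlag_fiber Q P
  have hpos : 0 < Nat.card {U // r U = P} :=
    have ⟨U, hU⟩ := FlagOfType.ofCompleteFlag_surjective P
    have : Nonempty {U // r U = P} := ⟨⟨U, hU⟩⟩
    Nat.card_pos
  have hbound := CompleteFlag.card_mul_one_add_sqrt_pow_le (C := r ⁻¹' C)
    fun U hU W hW h => hC _ hU _ hW (FlagOfType.opposite_ofCompleteFlag h)
  have htotal := hcard Set.univ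
  rw [Set.preimage_univ, Nat.card_univ, Nat.card_univ] at htotal
  rw [finrank_fin_fun, hcard, htotal, Nat.cast_mul, Nat.cast_mul, mul_right_comm] at hbound
  exact le_of_mul_le_mul_right hbound (by exact_mod_cast hpos)

/-- If `J ⊆ {1, …, n}` is a nonempty self-opposite type and `C` is an EKR-set of flags of
type `J` in `F_q^{n+1}`, then `|C| · (1 + (√q)^{n+1}) ≤ v` where `v` is the total number
of flags of type `J`. -/
theorem EKR_flags_of_type_bound (n : ℕ) (hn : 1 ≤ n)
    (F : Type) [Field F] [Fintype F] (q : ℕ) (hq : q = Fintype.card F)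
    (J : Finset ℕ) (hJsub : J ⊆ Finset.Icc 1 n) (hJne : J.Nonempty)
    (hJself : ∀ k, k ∈ J ↔ n + 1 - k ∈ J)
    (C : Set (FlagOfType F n J))
    (hC : ∀ F1 ∈ C, ∀ F2 ∈ C, ¬ F1.Opposite F2) :
    (Nat.card C : ℝ) * (1 + Real.sqrt q ^ (n + 1)) ≤ (Nat.card (FlagOfType F n J) : ℝ) := by
  rw [hq, ← Nat.card_eq_fintype_card]
  exact EKR_flags_of_type_bound_general hC
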